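/- arXiv:2505.11284 — 2 statements merged into one kernel-verified Lean document; each statement's English description precedes it below -/
import Mathlib

section
/- Let a, b ∈ ℕ with b > 4a + 4 and take α ≡ 1, so that φ(x) = 1 − x₁x₂^a. Then for every ε ∈ (0,1) there exist τ > 0 and a horizontal curve ω : [0,τ] → M with ω(0) = (0,0,0), ω(τ) = (0,ε,0), and sub-Riemannian length L(ω) < ε. Consequently, the curve γ(t) = (0,t,0) is not locally length-minimizing at t = 0. -/
open Set MeasureTheory

noncomputable section

/-- Concatenation of two functions at time `T`. -/
def glue (T : ℝ) (f g : ℝ → ℝ) (t : ℝ) : ℝ := if t ≤ T then f t else g (t - T)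

lemma glue_int {T S : ℝ} (hT : 0 ≤ T) (hS : 0 ≤ S) {u v : ℝ → ℝ}
    (hu : IntervalIntegrable u volume 0 T) (hv : IntervalIntegrable v volume 0 S) :
    IntervalIntegrable (glue T u v) volume 0 (T + S) := by
  have h1 : IntervalIntegrable (glue T u v) volume 0 T := by
    refine hu.congr ?_
    intro x hx
    rw [uIoc_of_le hT] at hx
    simp [glue, hx.2]
  have h2 : IntervalIntegrable (glue T u v) volume T (T + S) := by
    have := hv.comp_sub_right T
    rw [zero_add, add_comm S T] at this
    refine this.congr ?_
    intro x hx
    rw [uIoc_of_le (by linarith)] at hx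
    simp [glue, not_le.2 hx.1]
  exact h1.trans h2

lemma glue_left {T t : ℝ} (h0 : 0 ≤ t) (ht : t ≤ T) (u v : ℝ → ℝ) :
    ∫ s in (0 : ℝ)..t, glue T u v s = ∫ s in (0 : ℝ)..t, u s := by
  apply intervalIntegral.integral_congr
  intro x hx
  rw [uIcc_of_le h0] at hx
  simp [glue, hx.2.trans ht]

lemma glue_right {T t S : ℝ} (hT : 0 ≤ T) (h0 : 0 ≤ t) (hS : t ≤ S) {u v : ℝ → ℝ}
    (hu : IntervalIntegrable u volume 0 T) (hv : IntervalIntegrable v volume 0 S) :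
    ∫ s in (0 : ℝ)..(T + t), glue T u v s
      = (∫ s in (0 : ℝ)..T, u s) + ∫ s in (0 : ℝ)..t, v s := by
  have hi := glue_int hT (h0.trans hS) hu hv
  have hsub : ∀ {x y}, 0 ≤ x → x ≤ y → y ≤ T + S →
      IntervalIntegrable (glue T u v) volume x y := by
    intro x y hx hxy hy
    apply hi.mono_set
    rw [uIcc_of_le hxy, uIcc_of_le (by linarith)]
    exact Icc_subset_Icc hx hy
  rw [← intervalIntegral.integral_add_adjacent_intervals
    (hsub le_rfl hT (by linarith)) (hsub hT (by linarith : T ≤ T + t) (by linarith)),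
    glue_left hT le_rfl]
  congr 1
  have h2 : ∫ s in T..(T + t), glue T u v s = ∫ s in T..(T + t), v (s - T) := by
    apply intervalIntegral.integral_congr_ae
    filter_upwards with x hx
    rw [uIoc_of_le (by linarith)] at hx
    simp [glue, not_le.2 hx.1]
  rw [h2, intervalIntegral.integral_comp_sub_right (fun s => v s)]
  simp

lemma glue_prim {T S : ℝ} (hT : 0 ≤ T) {w w' u v : ℝ → ℝ}
    (hu : IntervalIntegrable u volume 0 T) (hv : IntervalIntegrable v volume 0 S)
    (hw : ∀ t ∈ Icc (0 : ℝ) T, w t = w 0 + ∫ s in (0 : ℝ)..t, u s)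
    (hw' : ∀ t ∈ Icc (0 : ℝ) S, w' t = w' 0 + ∫ s in (0 : ℝ)..t, v s)
    (hm : w T = w' 0) :
    ∀ t ∈ Icc (0 : ℝ) (T + S), glue T w w' t
      = glue T w w' 0 + ∫ s in (0 : ℝ)..t, glue T u v s := by
  intro t ht
  have e0 : glue T w w' 0 = w 0 := by simp [glue, hT]
  rw [e0]
  by_cases h : t ≤ T
  · rw [glue_left ht.1 h, ← hw t ⟨ht.1, h⟩]
    simp [glue, h]
  · have hh := not_le.1 h
    have := glue_right hT (by linarith : 0 ≤ t - T) (by linarith [ht.2] : t - T ≤ S) hu hv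
    rw [add_sub_cancel] at this
    rw [this, ← add_assoc, ← hw T ⟨hT, le_rfl⟩, hm, ← hw' (t - T) ⟨by linarith, by linarith [ht.2]⟩]
    simp [glue, h]

/-- The point `q` can be reached from `p` by an admissible curve of length at most `l`. -/
def Reach (a b : ℕ) (p₁ p₂ p₃ q₁ q₂ q₃ l : ℝ) : Prop :=
    ∃ τ : ℝ, 0 < τ ∧
    ∃ ω₁ ω₂ ω₃ u₁ u₂ : ℝ → ℝ,
      IntervalIntegrable u₁ volume 0 τ ∧
      IntervalIntegrable u₂ volume 0 τ ∧
      IntervalIntegrable (fun s => (ω₁ s) ^ 2 * (ω₂ s) ^ b * u₂ s) volume 0 τ ∧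
      (∀ t ∈ Icc (0 : ℝ) τ,
        ω₁ t ∈ Ioo (-(1/2) : ℝ) (1/2) ∧ ω₂ t ∈ Ioo (-1 : ℝ) 1) ∧
      (∀ t ∈ Icc (0 : ℝ) τ, ω₁ t = ω₁ 0 + ∫ s in (0 : ℝ)..t, u₁ s) ∧
      (∀ t ∈ Icc (0 : ℝ) τ, ω₂ t = ω₂ 0 + ∫ s in (0 : ℝ)..t, u₂ s) ∧
      (∀ t ∈ Icc (0 : ℝ) τ,
        ω₃ t = ω₃ 0 + ∫ s in (0 : ℝ)..t, (ω₁ s) ^ 2 * (ω₂ s) ^ b * u₂ s) ∧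
      ω₁ 0 = p₁ ∧ ω₂ 0 = p₂ ∧ ω₃ 0 = p₃ ∧
      ω₁ τ = q₁ ∧ ω₂ τ = q₂ ∧ ω₃ τ = q₃ ∧
      IntervalIntegrable (fun t => Real.sqrt ((u₁ t) ^ 2 +
          (1 - ω₁ t * (ω₂ t) ^ a) * (u₂ t) ^ 2)) volume 0 τ ∧
      (∫ t in (0 : ℝ)..τ,
        Real.sqrt ((u₁ t) ^ 2 +
          (1 - ω₁ t * (ω₂ t) ^ a) * (u₂ t) ^ 2)) ≤ l

lemma Reach.trans {a b : ℕ} {p₁ p₂ p₃ q₁ q₂ q₃ r₁ r₂ r₃ l m : ℝ}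
    (h : Reach a b p₁ p₂ p₃ q₁ q₂ q₃ l) (h' : Reach a b q₁ q₂ q₃ r₁ r₂ r₃ m) :
    Reach a b p₁ p₂ p₃ r₁ r₂ r₃ (l + m) := by
  obtain ⟨T, hT, w1, w2, w3, u1, u2, i1, i2, i3, hb, e1, e2, e3, s1, s2, s3, f1, f2, f3, i4, hl⟩ := h
  obtain ⟨S, hS, x1, x2, x3, v1, v2, j1, j2, j3, hb', g1, g2, g3, c1, c2, c3, d1, d2, d3, j4, hm⟩ := h'
  have k3 : (fun s => (glue T w1 x1 s) ^ 2 * (glue T w2 x2 s) ^ b * glue T u2 v2 s)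
      = glue T (fun s => (w1 s) ^ 2 * (w2 s) ^ b * u2 s)
        (fun s => (x1 s) ^ 2 * (x2 s) ^ b * v2 s) := by
    funext s; simp only [glue]; split_ifs <;> rfl
  have k4 : (fun s => Real.sqrt ((glue T u1 v1 s) ^ 2 +
          (1 - glue T w1 x1 s * (glue T w2 x2 s) ^ a) * (glue T u2 v2 s) ^ 2))
      = glue T (fun s => Real.sqrt ((u1 s) ^ 2 + (1 - w1 s * (w2 s) ^ a) * (u2 s) ^ 2))
        (fun s => Real.sqrt ((v1 s) ^ 2 + (1 - x1 s * (x2 s) ^ a) * (v2 s) ^ 2)) := by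
    funext s; simp only [glue]; split_ifs <;> rfl
  have z : ∀ f g : ℝ → ℝ, glue T f g 0 = f 0 := fun f g => by simp [glue, hT.le]
  have z' : ∀ f g : ℝ → ℝ, glue T f g (T + S) = g S := fun f g => by simp [glue, hS]
  refine ⟨T + S, by linarith, glue T w1 x1, glue T w2 x2, glue T w3 x3, glue T u1 v1, glue T u2 v2,
    glue_int hT.le hS.le i1 j1, glue_int hT.le hS.le i2 j2, ?_, ?_,
    glue_prim hT.le i1 j1 e1 g1 (f1.trans c1.symm), glue_prim hT.le i2 j2 e2 g2 (f2.trans c2.symm),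
    ?_, ?_, ?_, ?_, ?_, ?_, ?_, ?_, ?_⟩
  · rw [k3]; exact glue_int hT.le hS.le i3 j3
  · intro t ht
    simp only [glue]
    split_ifs with h
    · exact hb t ⟨ht.1, h⟩
    · have := not_le.1 h
      exact hb' (t - T) ⟨by linarith, by linarith [ht.2]⟩
  · rw [k3]; exact glue_prim hT.le i3 j3 e3 g3 (f3.trans c3.symm)
  · rw [z, s1]
  · rw [z, s2]
  · rw [z, s3]
  · rw [z', d1]
  · rw [z', d2]
  · rw [z', d3]
  · rw [k4]; exact glue_int hT.le hS.le i4 j4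
  · rw [k4, glue_right hT.le hS.le le_rfl i4 j4]; linarith

/-- A `C¹` piece. -/
lemma Reach.piece {a b : ℕ} {τ : ℝ} (hτ : 0 < τ) {f g f' g' : ℝ → ℝ} {z l p₁ p₂ q₁ q₂ q₃ : ℝ}
    (hf : ∀ t, HasDerivAt f (f' t) t) (hg : ∀ t, HasDerivAt g (g' t) t)
    (cf : Continuous f') (cg : Continuous g')
    (hb : ∀ t ∈ Icc (0 : ℝ) τ, f t ∈ Ioo (-(1/2) : ℝ) (1/2) ∧ g t ∈ Ioo (-1 : ℝ) 1)
    (s1 : f 0 = p₁) (s2 : g 0 = p₂) (t1 : f τ = q₁) (t2 : g τ = q₂)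
    (hz : z + ∫ s in (0 : ℝ)..τ, (f s) ^ 2 * (g s) ^ b * g' s = q₃)
    (hl : ∫ t in (0 : ℝ)..τ, Real.sqrt ((f' t) ^ 2 + (1 - f t * (g t) ^ a) * (g' t) ^ 2) ≤ l) :
    Reach a b p₁ p₂ z q₁ q₂ q₃ l := by
  have cf0 : Continuous f := continuous_iff_continuousAt.2 fun t => (hf t).continuousAt
  have cg0 : Continuous g := continuous_iff_continuousAt.2 fun t => (hg t).continuousAt
  refine ⟨τ, hτ, f, g, fun t => z + ∫ s in (0 : ℝ)..t, (f s) ^ 2 * (g s) ^ b * g' s, f', g',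
    cf.intervalIntegrable _ _, cg.intervalIntegrable _ _,
    Continuous.intervalIntegrable (by fun_prop) _ _, hb, ?_, ?_, ?_, s1, s2, ?_, t1, t2, hz,
    Continuous.intervalIntegrable (by fun_prop) _ _, hl⟩
  · intro t _
    rw [intervalIntegral.integral_eq_sub_of_hasDerivAt (fun x _ => hf x)
      (cf.intervalIntegrable _ _)]; ring
  · intro t _
    rw [intervalIntegral.integral_eq_sub_of_hasDerivAt (fun x _ => hg x)
      (cg.intervalIntegrable _ _)]; ring
  · intro t _; simp
  · simp

lemma seg_lt {t x y m : ℝ} (ht : t ∈ Icc (0 : ℝ) 1) (hx : x < m) (hy : y < m) :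
    x + t * (y - x) < m := by
  refine lt_of_le_of_lt ?_ (max_lt hx hy)
  have h1 := mul_le_mul_of_nonneg_left (le_max_right x y) ht.1
  have h2 := mul_le_mul_of_nonneg_left (le_max_left x y) (sub_nonneg.2 ht.2)
  linarith

/-- Moving `x₁` only. -/
lemma Reach.vert {a b : ℕ} {p q y z : ℝ} (hp : p ∈ Ioo (-(1/2) : ℝ) (1/2))
    (hq : q ∈ Ioo (-(1/2) : ℝ) (1/2)) (hy : y ∈ Ioo (-1 : ℝ) 1) :
    Reach a b p y z q y z |q - p| := by
  refine Reach.piece (τ := 1) one_pos (f := fun t => p + t * (q - p)) (g := fun _ => y)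
    (f' := fun _ => q - p) (g' := fun _ => 0) ?_ ?_ (by fun_prop) (by fun_prop) ?_
    (by simp) rfl (by simp) rfl (by simp) ?_
  · intro t
    simpa using ((hasDerivAt_id t).mul_const (q - p)).const_add p
  · intro t; exact hasDerivAt_const _ _
  · intro t ht
    refine ⟨⟨?_, ?_⟩, hy⟩
    · have := seg_lt ht (show -p < 1/2 by linarith [hp.1]) (show -q < 1/2 by linarith [hq.1])
      nlinarith
    · exact seg_lt ht hp.2 hq.2
  · simp [Real.sqrt_sq_eq_abs]

/-- Moving `x₂` only, at height `k ≥ 0`. -/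
lemma Reach.horiz {a b : ℕ} {k p q z : ℝ} (hk : k ∈ Ico (0 : ℝ) (1/2))
    (hp : p ∈ Ico (0 : ℝ) 1) (hq : q ∈ Ico (0 : ℝ) 1) :
    Reach a b k p z k q (z + k ^ 2 * ((q ^ (b + 1) - p ^ (b + 1)) / (b + 1))) |q - p| := by
  have hder : ∀ t, HasDerivAt (fun t => p + t * (q - p)) (q - p) t := by
    intro t
    simpa using ((hasDerivAt_id t).mul_const (q - p)).const_add p
  have h0 : ∀ t ∈ Icc (0 : ℝ) 1, 0 ≤ p + t * (q - p) := by
    intro t ht; nlinarith [ht.1, ht.2, hp.1, hq.1]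
  refine Reach.piece (τ := 1) one_pos (g := fun t => p + t * (q - p)) (f := fun _ => k)
    (g' := fun _ => q - p) (f' := fun _ => 0) ?_ hder (by fun_prop) (by fun_prop) ?_
    rfl (by simp) rfl (by simp) ?_ ?_
  · intro t; exact hasDerivAt_const _ _
  · intro t ht
    refine ⟨⟨by linarith [hk.1], hk.2⟩, by linarith [h0 t ht], ?_⟩
    exact seg_lt ht hp.2 hq.2
  · congr 1
    have := intervalIntegral.integral_eq_sub_of_hasDerivAt (a := 0) (b := 1)
      (f := fun t => k ^ 2 * ((p + t * (q - p)) ^ (b + 1) / (b + 1)))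
      (f' := fun t => k ^ 2 * (p + t * (q - p)) ^ b * (q - p)) ?_
      (Continuous.intervalIntegrable (by fun_prop) _ _)
    · rw [this]; simp; ring
    · intro t _
      have := (((hder t).pow (b + 1)).div_const ((b : ℝ) + 1)).const_mul (k ^ 2)
      refine this.congr_deriv ?_
      have : (b : ℝ) + 1 ≠ 0 := by positivity
      push_cast
      field_simp
  · have : ∫ t in (0 : ℝ)..1, Real.sqrt ((0 : ℝ) ^ 2 + (1 - k * (p + t * (q - p)) ^ a) * (q - p) ^ 2)
        ≤ ∫ t in (0 : ℝ)..1, |q - p| := by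
      apply intervalIntegral.integral_mono_on zero_le_one
        (Continuous.intervalIntegrable (by fun_prop) _ _) (by simp)
      intro t ht
      rw [← Real.sqrt_sq_eq_abs]
      apply Real.sqrt_le_sqrt
      have := mul_nonneg (mul_nonneg hk.1 (pow_nonneg (h0 t ht) a)) (sq_nonneg (q - p))
      nlinarith
    simpa using this

/-- The initial bump. -/
lemma Reach.bump {a b : ℕ} {s κ : ℝ} (hs : 0 < s) (hs1 : s < 1)
    (hκ : κ = 1 / (((a : ℝ) + 2) * (a + 3))) :
    ∃ z, 0 ≤ z ∧ z ≤ κ ^ 2 * s ^ (2 * a + 5 + b) ∧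
      Reach a b 0 0 0 0 s z (s - κ ^ 2 / 3 * s ^ (2 * a + 3)) := by
  have hκ0 : 0 < κ := by rw [hκ]; positivity
  have hκ1 : κ ≤ 1 / 6 := by
    rw [hκ]; apply one_div_le_one_div_of_le (by norm_num)
    have : (0 : ℝ) ≤ a := by positivity
    nlinarith
  set c := κ * s ^ a with hc
  have hc0 : 0 < c := by positivity
  have hsa : s ^ a ≤ 1 := pow_le_one₀ hs.le hs1.le
  have hc1 : c ≤ 1 / 6 := by
    have : 0 < s ^ a := by positivity
    nlinarith
  have hx0 : ∀ t ∈ Icc (0 : ℝ) s, 0 ≤ c * (t * (s - t)) := by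
    intro t ht
    exact mul_nonneg hc0.le (mul_nonneg ht.1 (by linarith [ht.2]))
  have hx1 : ∀ t ∈ Icc (0 : ℝ) s, c * (t * (s - t)) ≤ c * s ^ 2 := by
    intro t ht
    apply mul_le_mul_of_nonneg_left _ hc0.le
    nlinarith [ht.1, ht.2]
  refine ⟨∫ t in (0 : ℝ)..s, (c * (t * (s - t))) ^ 2 * t ^ b * 1, ?_, ?_, ?_⟩
  · apply intervalIntegral.integral_nonneg hs.le
    intro t ht
    have := ht.1
    positivity
  · have : ∫ t in (0 : ℝ)..s, (c * (t * (s - t))) ^ 2 * t ^ b * 1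
        ≤ ∫ t in (0 : ℝ)..s, (c * s ^ 2) ^ 2 * s ^ b := by
      apply intervalIntegral.integral_mono_on hs.le
        (Continuous.intervalIntegrable (by fun_prop) _ _) (by simp)
      intro t ht
      rw [mul_one]
      apply mul_le_mul (pow_le_pow_left₀ (hx0 t ht) (hx1 t ht) 2)
        (pow_le_pow_left₀ ht.1 ht.2 b) (pow_nonneg ht.1 b) (by positivity)
    refine this.trans (le_of_eq ?_)
    simp [hc]
    ring
  · refine Reach.piece (τ := s) hs (f := fun t => c * (t * (s - t))) (g := fun t => t)
      (f' := fun t => c * (s - 2 * t)) (g' := fun _ => 1) ?_ (fun t => hasDerivAt_id t)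
      (by fun_prop) (by fun_prop) ?_ (by simp) rfl (by simp) rfl (by simp) ?_
    · intro t
      refine (((hasDerivAt_id t).mul ((hasDerivAt_id t).const_sub s)).const_mul c).congr_deriv ?_
      simp only [id]; ring
    · intro t ht
      have h0 := hx0 t ht
      have h1 := hx1 t ht
      have : c * s ^ 2 ≤ 1 / 6 := by
        have : s ^ 2 ≤ 1 := pow_le_one₀ hs.le hs1.le
        nlinarith
      exact ⟨⟨by linarith, by linarith⟩, by linarith [ht.1], by linarith [ht.2]⟩
    · have : ∫ t in (0 : ℝ)..s, Real.sqrt ((c * (s - 2 * t)) ^ 2 +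
            (1 - c * (t * (s - t)) * t ^ a) * 1 ^ 2)
          ≤ ∫ t in (0 : ℝ)..s, (1 + ((c * (s - 2 * t)) ^ 2 - c * (t * (s - t)) * t ^ a) / 2) := by
        apply intervalIntegral.integral_mono_on hs.le
          (Continuous.intervalIntegrable (by fun_prop) _ _)
          (Continuous.intervalIntegrable (by fun_prop) _ _)
        intro t ht
        have h0 := hx0 t ht
        have h1 := hx1 t ht
        have h2 : c * s ^ 2 ≤ 1 / 6 := by
          have : s ^ 2 ≤ 1 := pow_le_one₀ hs.le hs1.le
          nlinarith
        have h3 : t ^ a ≤ 1 := pow_le_one₀ ht.1 (ht.2.trans hs1.le)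
        have h4 : 0 ≤ t ^ a := pow_nonneg ht.1 a
        have h5 : c * (t * (s - t)) * t ^ a ≤ 1 := by nlinarith
        have h6 := sq_nonneg (c * (s - 2 * t))
        apply Real.sqrt_le_iff.2
        constructor
        · linarith
        · nlinarith [sq_nonneg ((c * (s - 2 * t)) ^ 2 - c * (t * (s - t)) * t ^ a)]
      refine this.trans (le_of_eq ?_)
      have := intervalIntegral.integral_eq_sub_of_hasDerivAt (a := 0) (b := s)
        (f := fun t => t + (c ^ 2 * (s ^ 2 * t - 2 * s * t ^ 2 + 4 / 3 * t ^ 3)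
          - c * (s * (t ^ (a + 2) / (a + 2)) - t ^ (a + 3) / (a + 3))) / 2)
        (f' := fun t => 1 + ((c * (s - 2 * t)) ^ 2 - c * (t * (s - t)) * t ^ a) / 2) ?_
        (Continuous.intervalIntegrable (by fun_prop) _ _)
      · rw [this]
        have e : c = κ * s ^ a := hc
        have e2 : s ^ a * s ^ a = s ^ (2 * a) := by ring
        have e3 : s ^ (a + 3) / ((a : ℝ) + 2) - s ^ (a + 3) / (a + 3) = κ * s ^ (a + 3) := by
          rw [hκ]; field_simp; ring
        have e4 : s * (s ^ (a + 2) / ((a : ℝ) + 2)) - s ^ (a + 3) / (a + 3) = κ * s ^ (a + 3) := by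
          rw [← e3]; ring
        simp only [e4]
        simp
        rw [e]
        ring
      · intro t _
        have p2 := (hasDerivAt_pow (a + 2) t).div_const ((a : ℝ) + 2)
        have p3 := (hasDerivAt_pow (a + 3) t).div_const ((a : ℝ) + 3)
        have q2 := (hasDerivAt_pow 2 t).const_mul (2 * s)
        have q3 := (hasDerivAt_pow 3 t).const_mul (4 / 3 : ℝ)
        have q1 := (hasDerivAt_id t).const_mul (s ^ 2)
        refine ((hasDerivAt_id t).add (((((q1.sub q2).add q3).const_mul (c ^ 2)).sub
          (((p2.const_mul s).sub p3).const_mul c)).div_const 2)).congr_deriv ?_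
        have h2 : (a : ℝ) + 2 ≠ 0 := by positivity
        have h3 : (a : ℝ) + 3 ≠ 0 := by positivity
        push_cast
        field_simp
        ring

lemma exists_reach (a b : ℕ) (hb : 4 * a + 4 < b) (ε : ℝ) (hε : 0 < ε) (hε1 : ε < 1) :
    ∃ l, l < ε ∧ Reach a b 0 0 0 0 ε 0 l := by
  obtain ⟨κ, hκ⟩ : ∃ κ : ℝ, κ = 1 / (((a : ℝ) + 2) * (a + 3)) := ⟨_, rfl⟩
  have hκ0 : 0 < κ := by rw [hκ]; positivity
  have hκ1 : κ ≤ 1 / 6 := by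
    rw [hκ]; apply one_div_le_one_div_of_le (by norm_num)
    have : (0 : ℝ) ≤ a := by positivity
    nlinarith
  obtain ⟨η, hη⟩ : ∃ η : ℝ, η = κ ^ 2 / 24 := ⟨_, rfl⟩
  have hη0 : 0 < η := by rw [hη]; positivity
  have hη1 : η ≤ 1 / 24 := by rw [hη]; nlinarith
  have hB : (0 : ℝ) < b + 1 := by positivity
  have hεb : 0 < ε ^ b := by positivity
  have hεb1 : ε ^ b ≤ 1 := pow_le_one₀ hε.le hε1.le
  obtain ⟨s, hsd⟩ : ∃ s : ℝ, s = η ^ 2 * ε ^ b * ε / (24 * (b + 1)) := ⟨_, rfl⟩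
  have hs : 0 < s := by rw [hsd]; positivity
  have hsm : 24 * (b + 1) * s ≤ η ^ 2 * ε ^ b := by
    have : 24 * (b + 1) * s = η ^ 2 * ε ^ b * ε := by rw [hsd]; field_simp
    rw [this]
    have : 0 < η ^ 2 * ε ^ b := by positivity
    nlinarith
  have hsε : s ≤ ε := by
    rw [hsd, div_le_iff₀ (by positivity)]
    have h1 : η ^ 2 * ε ^ b ≤ 1 := by
      have : η ^ 2 ≤ 1 := by nlinarith
      nlinarith
    have : (0 : ℝ) ≤ b := by positivity
    nlinarith
  have hs1 : s < 1 := by linarith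
  obtain ⟨z, hz0, hz1, hR⟩ := Reach.bump (b := b) hs hs1 hκ
  obtain ⟨P, hP⟩ : ∃ P : ℝ, P = s ^ (2 * a + 3) := ⟨_, rfl⟩
  have hP0 : 0 < P := by rw [hP]; positivity
  have hPs : P ≤ s := by
    rw [hP]; exact pow_le_of_le_one hs.le hs1.le (by omega)
  obtain ⟨r, hr⟩ : ∃ r : ℝ, r = η * P := ⟨_, rfl⟩
  have hr0 : 0 < r := by rw [hr]; positivity
  have hrε : r ≤ ε := by rw [hr]; nlinarith
  obtain ⟨D, hD⟩ : ∃ D : ℝ, D = (ε ^ (b + 1) - (ε - r) ^ (b + 1)) / (b + 1) := ⟨_, rfl⟩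
  have hDr : r * ε ^ b / (b + 1) ≤ D := by
    rw [hD]
    gcongr
    have h1 : (ε - r) ^ b ≤ ε ^ b := pow_le_pow_left₀ (by linarith) (by linarith) b
    have h2 : 0 ≤ ε - r := by linarith
    rw [pow_succ, pow_succ]
    nlinarith
  have hD0 : 0 < D := lt_of_lt_of_le (by positivity) hDr
  obtain ⟨k, hk⟩ : ∃ k : ℝ, k = Real.sqrt (z / D) := ⟨_, rfl⟩
  have hk0 : 0 ≤ k := by rw [hk]; positivity
  have hk2 : k ^ 2 * D = z := by
    rw [hk, Real.sq_sqrt (by positivity)]; field_simp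
  have hkr : k ≤ r := by
    rw [hk]
    apply Real.sqrt_le_iff.2
    refine ⟨hr0.le, ?_⟩
    rw [div_le_iff₀ hD0]
    have h1 : r ^ 2 * (r * ε ^ b / (b + 1)) ≤ r ^ 2 * D := by gcongr
    refine le_trans (hz1.trans ?_) h1
    have h2 : s ^ (2 * a + 5 + b) ≤ P ^ 3 * s := by
      have : P ^ 3 * s = s ^ (6 * a + 10) := by rw [hP]; ring
      rw [this]
      exact pow_le_pow_of_le_one hs.le hs1.le (by omega)
    have h3 : κ ^ 2 = 24 * η := by rw [hη]; ring
    have h4 : r ^ 2 * (r * ε ^ b / (b + 1)) = η * P ^ 3 * (η ^ 2 * ε ^ b) / (b + 1) := by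
      rw [hr]; ring
    rw [h4, le_div_iff₀ hB, h3]
    have h5 : η * P ^ 3 * (24 * (b + 1) * s) ≤ η * P ^ 3 * (η ^ 2 * ε ^ b) := by gcongr
    refine le_trans ?_ h5
    have h6 : 24 * η * s ^ (2 * a + 5 + b) * (b + 1) ≤ 24 * η * (P ^ 3 * s) * (b + 1) := by gcongr
    linarith
  have hrh : r < 1 / 2 := by rw [hr]; nlinarith
  have m0 : (0 : ℝ) ∈ Ioo (-(1/2) : ℝ) (1/2) := by norm_num
  have mk : k ∈ Ioo (-(1/2) : ℝ) (1/2) := ⟨by linarith, by linarith⟩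
  have mr : ε - r ∈ Ico (0 : ℝ) 1 := ⟨by linarith, by linarith⟩
  have me : ε ∈ Ico (0 : ℝ) 1 := ⟨hε.le, hε1⟩
  have n0 : (0 : ℝ) ∈ Ico (0 : ℝ) (1/2) := by norm_num
  have A1 := Reach.horiz (a := a) (b := b) (z := z) n0 (⟨hs.le, hs1⟩ : s ∈ Ico (0 : ℝ) 1) me
  have A2 := Reach.vert (a := a) (b := b) (z := z) m0 mk (⟨by linarith, hε1⟩ : ε ∈ Ioo (-1 : ℝ) 1)
  have A3 := Reach.horiz (a := a) (b := b) (z := z) (⟨hk0, mk.2⟩ : k ∈ Ico (0 : ℝ) (1/2)) me mr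
  have A4 := Reach.vert (a := a) (b := b) (z := 0) mk m0
    (⟨by linarith, by linarith⟩ : ε - r ∈ Ioo (-1 : ℝ) 1)
  have A5 := Reach.horiz (a := a) (b := b) (z := 0) n0 mr me
  have e3 : z + k ^ 2 * (((ε - r) ^ (b + 1) - ε ^ (b + 1)) / (b + 1)) = 0 := by
    have : ((ε - r) ^ (b + 1) - ε ^ (b + 1)) / ((b : ℝ) + 1) = - D := by rw [hD]; ring
    rw [this]; linarith
  rw [e3] at A3
  rw [show z + (0 : ℝ) ^ 2 * ((ε ^ (b + 1) - s ^ (b + 1)) / ((b : ℝ) + 1)) = z by ring] at A1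
  rw [show (0 : ℝ) + (0 : ℝ) ^ 2 * ((ε ^ (b + 1) - (ε - r) ^ (b + 1)) / ((b : ℝ) + 1)) = 0 by ring]
    at A5
  refine ⟨_, ?_, ((((hR.trans A1).trans A2).trans A3).trans A4).trans A5⟩
  rw [abs_of_nonneg (by linarith : 0 ≤ ε - s), sub_zero, abs_of_nonneg hk0,
    show ε - r - ε = -r by ring, zero_sub, abs_neg, abs_neg, abs_of_nonneg hk0,
    abs_of_nonneg hr0.le, show ε - (ε - r) = r by ring, abs_of_nonneg hr0.le, ← hP,
    show κ ^ 2 = 24 * η by rw [hη]; ring]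
  have : 0 < η * P := by positivity
  rw [hr] at hkr ⊢
  linarith

end

/-- For `a, b ∈ ℕ` with `b > 4a + 4` and `α ≡ 1` (so that
`φ(x) = 1 - x₁x₂^a`), for every `ε ∈ (0,1)` there is a horizontal curve
`ω : [0,τ] → M` from `(0,0,0)` to `(0,ε,0)` of sub-Riemannian length `< ε`;
hence `γ(t) = (0,t,0)` is not locally length-minimizing at `t = 0`.
Horizontality means `ω₃' = x₁²x₂^b·ω₂'`, encoded via integrable controls
`u₁ = ω₁'`, `u₂ = ω₂'`. -/
theorem statement2 (a b : ℕ) (hb : 4 * a + 4 < b) :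
    ∀ ε : ℝ, 0 < ε → ε < 1 →
    ∃ τ : ℝ, 0 < τ ∧
    ∃ ω₁ ω₂ ω₃ u₁ u₂ : ℝ → ℝ,
      IntervalIntegrable u₁ volume 0 τ ∧
      IntervalIntegrable u₂ volume 0 τ ∧
      IntervalIntegrable (fun s => (ω₁ s) ^ 2 * (ω₂ s) ^ b * u₂ s) volume 0 τ ∧
      (∀ t ∈ Icc (0 : ℝ) τ,
        ω₁ t ∈ Ioo (-(1/2) : ℝ) (1/2) ∧ ω₂ t ∈ Ioo (-1 : ℝ) 1) ∧
      (∀ t ∈ Icc (0 : ℝ) τ, ω₁ t = ω₁ 0 + ∫ s in (0 : ℝ)..t, u₁ s) ∧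
      (∀ t ∈ Icc (0 : ℝ) τ, ω₂ t = ω₂ 0 + ∫ s in (0 : ℝ)..t, u₂ s) ∧
      (∀ t ∈ Icc (0 : ℝ) τ,
        ω₃ t = ω₃ 0 + ∫ s in (0 : ℝ)..t, (ω₁ s) ^ 2 * (ω₂ s) ^ b * u₂ s) ∧
      ω₁ 0 = 0 ∧ ω₂ 0 = 0 ∧ ω₃ 0 = 0 ∧
      ω₁ τ = 0 ∧ ω₂ τ = ε ∧ ω₃ τ = 0 ∧
      (∫ t in (0 : ℝ)..τ,
        Real.sqrt ((u₁ t) ^ 2 +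
          (1 - ω₁ t * (ω₂ t) ^ a) * (u₂ t) ^ 2)) < ε := by
  intro ε hε hε1
  obtain ⟨l, hl, τ, hτ, w1, w2, w3, u1, u2, i1, i2, i3, hbox, e1, e2, e3, s1, s2, s3, f1, f2, f3,
    _, hlen⟩ := exists_reach a b hb ε hε hε1
  exact ⟨τ, hτ, w1, w2, w3, u1, u2, i1, i2, i3, hbox, e1, e2, e3, s1, s2, s3, f1, f2, f3,
    hlen.trans_lt hl⟩
end

section
/- Let b ∈ ℕ be even and let ε > 0 satisfy (2+b)·8^{b/2}·ε^{b/2} ≤ 1. Let ω = (ω₁,ω₂) : [0,τ] → ℝ² be a Lipschitz curve with |ω₁'(t)| ≤ 2 and |ω₂'(t)| ≤ 2 for almost every t, with |ω₁(t)| ≤ 8ε and |ω₂(t)| ≤ 8ε for all t ∈ [0,τ], and such that P(0) = P(τ) = 0, where P(t) := ω₁(t)·ω₂(t)^{b/2}. Set β := max_{t∈[0,τ]} |P(t)|. Then ∫₀^τ ω₁(t)²·ω₂(t)^b dt ≥ β³/8. -/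
open Set MeasureTheory

theorem aux_pow_diff (M x y : ℝ) (hx : |x| ≤ M) (hy : |y| ≤ M) (k : ℕ) :
    M * |x ^ k - y ^ k| ≤ k * M ^ k * |x - y| := by
  have hM : 0 ≤ M := le_trans (abs_nonneg x) hx
  induction k with
  | zero => simp
  | succ k ih =>
    have h1 : x ^ (k + 1) - y ^ (k + 1) = x * (x ^ k - y ^ k) + (x - y) * y ^ k := by ring
    have h2 : |x ^ (k + 1) - y ^ (k + 1)| ≤ |x| * |x ^ k - y ^ k| + |x - y| * |y| ^ k := by
      rw [h1]
      refine (abs_add_le _ _).trans ?_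
      rw [abs_mul, abs_mul, abs_pow]
    have h3 : |y| ^ k ≤ M ^ k := pow_le_pow_left₀ (abs_nonneg y) hy k
    calc M * |x ^ (k + 1) - y ^ (k + 1)|
        ≤ M * (|x| * |x ^ k - y ^ k| + |x - y| * |y| ^ k) := by gcongr
      _ ≤ M * (M * |x ^ k - y ^ k| + |x - y| * M ^ k) := by gcongr
      _ ≤ M * (k * M ^ k * |x - y| + |x - y| * M ^ k) := by gcongr
      _ = ((k + 1 : ℕ) : ℝ) * M ^ (k + 1) * |x - y| := by push_cast; ring

/-- Let `b` be even and `ε > 0` with `(2+b)·8^(b/2)·ε^(b/2) ≤ 1`. Let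
`ω = (ω₁,ω₂) : [0,τ] → ℝ²` be a Lipschitz curve with `|ω₁'| ≤ 2` and `|ω₂'| ≤ 2` a.e.
(equivalently, each component is `2`-Lipschitz on `[0,τ]`), with `|ω₁|, |ω₂| ≤ 8ε` on
`[0,τ]`, and with `P(0) = P(τ) = 0` where `P(t) = ω₁(t)·ω₂(t)^(b/2)`. If
`β = max_{[0,τ]} |P|`, then `∫₀^τ ω₁²ω₂^b ≥ β³/8`. -/
theorem statement8 (b : ℕ) (hb : Even b)
    (ε : ℝ) (hε : 0 < ε)
    (hεb : ((2 : ℝ) + b) * 8 ^ (b / 2) * ε ^ (b / 2) ≤ 1)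
    (τ : ℝ) (hτ : 0 ≤ τ)
    (ω₁ ω₂ : ℝ → ℝ)
    (hlip₁ : LipschitzOnWith 2 ω₁ (Icc 0 τ))
    (hlip₂ : LipschitzOnWith 2 ω₂ (Icc 0 τ))
    (hbd : ∀ t ∈ Icc (0 : ℝ) τ, |ω₁ t| ≤ 8 * ε ∧ |ω₂ t| ≤ 8 * ε)
    (hP0 : ω₁ 0 * (ω₂ 0) ^ (b / 2) = 0)
    (hPτ : ω₁ τ * (ω₂ τ) ^ (b / 2) = 0)
    (β : ℝ)
    (hβ : IsGreatest ((fun t => |ω₁ t * (ω₂ t) ^ (b / 2)|) '' Icc (0 : ℝ) τ) β) :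
    β ^ 3 / 8 ≤ ∫ t in (0 : ℝ)..τ, (ω₁ t) ^ 2 * (ω₂ t) ^ b := by
  obtain ⟨k, rfl⟩ := hb
  have hk : (k + k) / 2 = k := by omega
  rw [hk] at hεb hP0 hPτ
  simp only [hk] at hβ
  have hM : ((2 : ℝ) + 2 * k) * (8 * ε) ^ k ≤ 1 := by
    rw [mul_pow]; push_cast at hεb; linarith
  have hL : ∀ s ∈ Icc (0 : ℝ) τ, ∀ t ∈ Icc (0 : ℝ) τ,
      |ω₁ s * ω₂ s ^ k - ω₁ t * ω₂ t ^ k| ≤ |s - t| := by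
    intro s hs t ht
    have l1 : |ω₁ s - ω₁ t| ≤ 2 * |s - t| := by
      simpa [Real.dist_eq] using hlip₁.dist_le_mul s hs t ht
    have l2 : |ω₂ s - ω₂ t| ≤ 2 * |s - t| := by
      simpa [Real.dist_eq] using hlip₂.dist_le_mul s hs t ht
    have h0 := aux_pow_diff (8 * ε) (ω₂ s) (ω₂ t) (hbd s hs).2 (hbd t ht).2 k
    have h3 : |ω₂ s| ^ k ≤ (8 * ε) ^ k := pow_le_pow_left₀ (abs_nonneg _) (hbd s hs).2 k
    have e : ω₁ s * ω₂ s ^ k - ω₁ t * ω₂ t ^ k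
        = (ω₁ s - ω₁ t) * ω₂ s ^ k + ω₁ t * (ω₂ s ^ k - ω₂ t ^ k) := by ring
    calc |ω₁ s * ω₂ s ^ k - ω₁ t * ω₂ t ^ k|
        ≤ |ω₁ s - ω₁ t| * |ω₂ s| ^ k + |ω₁ t| * |ω₂ s ^ k - ω₂ t ^ k| := by
          rw [e]
          refine (abs_add_le _ _).trans ?_
          rw [abs_mul, abs_mul, abs_pow]
      _ ≤ (2 * |s - t|) * (8 * ε) ^ k + (8 * ε) * |ω₂ s ^ k - ω₂ t ^ k| := by
          gcongr
          exact (hbd t ht).1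
      _ ≤ (2 * |s - t|) * (8 * ε) ^ k + k * (8 * ε) ^ k * |ω₂ s - ω₂ t| := by gcongr
      _ ≤ (2 * |s - t|) * (8 * ε) ^ k + k * (8 * ε) ^ k * (2 * |s - t|) := by gcongr
      _ = ((2 + 2 * k) * (8 * ε) ^ k) * |s - t| := by ring
      _ ≤ 1 * |s - t| := by gcongr
      _ = |s - t| := one_mul _
  obtain ⟨⟨c, hc, hcβ⟩, -⟩ := hβ
  simp only at hcβ
  have hβ0 : 0 ≤ β := hcβ ▸ abs_nonneg _
  have hc0 : β ≤ c := by
    have := hL c hc 0 ⟨le_rfl, hτ⟩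
    rwa [hP0, sub_zero, sub_zero, hcβ, abs_of_nonneg hc.1] at this
  have hcτ : β ≤ τ - c := by
    have := hL c hc τ ⟨hτ, le_rfl⟩
    rwa [hPτ, sub_zero, hcβ, abs_sub_comm, abs_of_nonneg (sub_nonneg.2 hc.2)] at this
  have hcont : ContinuousOn (fun t => ω₁ t ^ 2 * ω₂ t ^ (k + k)) (Icc 0 τ) :=
    (hlip₁.continuousOn.pow 2).mul (hlip₂.continuousOn.pow _)
  have hint : IntervalIntegrable (fun t => ω₁ t ^ 2 * ω₂ t ^ (k + k)) volume 0 τ :=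
    ContinuousOn.intervalIntegrable_of_Icc hτ hcont
  have hsq : ∀ t, ω₁ t ^ 2 * ω₂ t ^ (k + k) = |ω₁ t * ω₂ t ^ k| ^ 2 := by
    intro t; rw [sq_abs]; ring
  have hsub : Icc (c - β / 2) (c + β / 2) ⊆ Icc 0 τ :=
    Icc_subset_Icc (by linarith) (by linarith)
  have hmono : ∫ t in (c - β / 2)..(c + β / 2), ω₁ t ^ 2 * ω₂ t ^ (k + k)
      ≤ ∫ t in (0 : ℝ)..τ, ω₁ t ^ 2 * ω₂ t ^ (k + k) := by
    apply intervalIntegral.integral_mono_interval (by linarith) (by linarith) (by linarith) _ hint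
    refine Filter.Eventually.of_forall fun t => ?_
    simp only [Pi.zero_apply, hsq]
    positivity
  have hlow : ∫ t in (c - β / 2)..(c + β / 2), (β / 2) ^ 2
      ≤ ∫ t in (c - β / 2)..(c + β / 2), ω₁ t ^ 2 * ω₂ t ^ (k + k) := by
    apply intervalIntegral.integral_mono_on (by linarith) (by simp)
      (ContinuousOn.intervalIntegrable_of_Icc (by linarith) (hcont.mono hsub))
    intro t ht
    rw [hsq]
    have h1 := hL c hc t (hsub ht)
    have h2 : |c - t| ≤ β / 2 := abs_le.2 ⟨by linarith [ht.2], by linarith [ht.1]⟩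
    have h3 := abs_sub_abs_le_abs_sub (ω₁ c * ω₂ c ^ k) (ω₁ t * ω₂ t ^ k)
    rw [hcβ] at h3
    exact pow_le_pow_left₀ (by linarith) (by linarith) 2
  rw [intervalIntegral.integral_const, smul_eq_mul] at hlow
  have : 0 ≤ β ^ 3 := by positivity
  have e : (c + β / 2 - (c - β / 2)) * (β / 2) ^ 2 = β ^ 3 / 4 := by ring
  linarith
end
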